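/- The Dougall bilateral ${}_5H_5$ formula: for complex parameters $b_1,b_2,b_3,b_4$ and $\theta$ with $\mathrm{Re}(b_1+b_2+b_3+b_4) > 3$ and $\theta$ not an integer, $\sum_{k=-\infty}^{\infty} \frac{k+\theta}{\prod_{\alpha=1}^{4} \Gamma(b_\alpha + \theta + k)\, \Gamma(b_\alpha - \theta - k)} = \frac{\sin 2\pi\theta}{2\pi} \cdot \frac{\Gamma(b_1+b_2+b_3+b_4-3)}{\prod_{1 \le \alpha < \beta \le 4} \Gamma(b_\alpha + b_\beta - 1)}$. -/

import Mathlib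

open Complex Real

/-!
Zeilberger's telescoping method yields a first-order recurrence for the series under `b₁ ↦ b₁ + 1`.
Iterating it and letting the shifted parameter tend to infinity writes the series as an explicit
Gamma factor in `b₁`, times the series with the parameters `b₂, b₃, b₄` alone. Hence Dougall's
formula for one value of `b₁` implies it for every other value, as long as the three-parameter
series converges and the Gamma factor does not vanish. For `b₁ = 1 + θ` and `b₂ = 1 - θ` all terms
but the one with `k = 0` vanish, and the formula reduces to the reflection formula for `Γ`. Trading
these two values for arbitrary ones proves it for parameters of large real part, and the recurrence
descends from there to the whole region `3 < Re (b₁ + b₂ + b₃ + b₄)`.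
-/

open Asymptotics Filter Topology
open scoped Nat

/-! ### Families indexed by the integers -/

theorem hasSum_sub_add_one_of_tendsto_cofinite {E : Type*} [AddCommGroup E] [TopologicalSpace E]
    [IsTopologicalAddGroup E] [T2Space E] {f : ℤ → E} (hf : Tendsto f cofinite (𝓝 0))
    (hs : Summable fun k ↦ f k - f (k + 1)) : HasSum (fun k ↦ f k - f (k + 1)) 0 := by
  have hpos : Tendsto (fun n : ℕ ↦ f n) atTop (𝓝 0) := by
    simpa [Nat.cofinite_eq_atTop, Function.comp_def]
      using hf.comp (Nat.cast_injective (R := ℤ)).tendsto_cofinite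
  have hneg : Tendsto (fun n : ℕ ↦ f (-n)) atTop (𝓝 0) := by
    simpa [Nat.cofinite_eq_atTop, Function.comp_def]
      using hf.comp (neg_injective.comp (Nat.cast_injective (R := ℤ))).tendsto_cofinite
  have hlim : Tendsto (fun n : ℕ ↦ f (-n) - f n) atTop (𝓝 0) := by simpa using hneg.sub hpos
  have hpartial := hs.hasSum.comp (Finset.tendsto_Ico_neg (R := ℤ))
  simp only [Function.comp_def, Finset.sum_Ico_int_sub] at hpartial
  exact tendsto_nhds_unique hpartial hlim ▸ hs.hasSum

theorem isBigO_abs_rpow_cofinite_of_nat {E : Type*} [Norm E] {f : ℤ → E} {p : ℝ}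
    (hpos : (fun n : ℕ ↦ f n) =O[atTop] fun n : ℕ ↦ (n : ℝ) ^ p)
    (hneg : (fun n : ℕ ↦ f (-n)) =O[atTop] fun n : ℕ ↦ (n : ℝ) ^ p) :
    f =O[cofinite] fun k : ℤ ↦ |(k : ℝ)| ^ p := by
  have hbot : map (fun n : ℕ ↦ (-n : ℤ)) atTop = atBot := by
    rw [show (fun n : ℕ ↦ (-n : ℤ)) = Neg.neg ∘ (Nat.cast : ℕ → ℤ) from rfl, ← map_map,
      Nat.map_cast_int_atTop]
    exact (OrderIso.neg ℤ).map_atTop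
  rw [Int.cofinite_eq, isBigO_sup, ← hbot, ← Nat.map_cast_int_atTop]
  exact ⟨isBigO_map.mpr (by simpa [Function.comp_def] using hneg),
    isBigO_map.mpr (by simpa [Function.comp_def] using hpos)⟩

theorem isBigO_abs_rpow_cofinite_mul {R : Type*} [SeminormedRing R] {f g : ℤ → R} {p q : ℝ}
    (hf : f =O[cofinite] fun k : ℤ ↦ |(k : ℝ)| ^ p)
    (hg : g =O[cofinite] fun k : ℤ ↦ |(k : ℝ)| ^ q) :
    (fun k ↦ f k * g k) =O[cofinite] fun k : ℤ ↦ |(k : ℝ)| ^ (p + q) := by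
  refine (hf.mul hg).congr' .rfl ?_
  filter_upwards [(Set.finite_singleton (0 : ℤ)).compl_mem_cofinite] with k hk
  rw [Real.rpow_add (abs_pos.mpr (Int.cast_ne_zero.mpr hk))]

theorem isBigO_add_intCast (θ : ℂ) :
    (fun k : ℤ ↦ θ + k) =O[cofinite] fun k : ℤ ↦ |(k : ℝ)| ^ (1 : ℝ) := by
  refine .of_bound (‖θ‖ + 1) ?_
  filter_upwards [(Set.finite_singleton (0 : ℤ)).compl_mem_cofinite] with k hk
  have hone : (1 : ℝ) ≤ |(k : ℝ)| := by exact_mod_cast Int.one_le_abs hk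
  calc ‖θ + k‖ ≤ ‖θ‖ + |(k : ℝ)| := (norm_add_le _ _).trans_eq (by rw [Complex.norm_intCast])
    _ ≤ (‖θ‖ + 1) * |(k : ℝ)| := by nlinarith [norm_nonneg θ]
    _ = (‖θ‖ + 1) * ‖|(k : ℝ)| ^ (1 : ℝ)‖ := by simp

theorem tendsto_abs_rpow_cofinite {p : ℝ} (hp : p < 0) :
    Tendsto (fun k : ℤ ↦ |(k : ℝ)| ^ p) cofinite (𝓝 0) := by
  have h := (tendsto_rpow_neg_atTop (neg_pos.mpr hp)).comp
    (tendsto_norm_cocompact_atTop.comp Int.tendsto_coe_cofinite)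
  simpa [Function.comp_def] using h

theorem tendsto_add_natCast_div_natCast (z : ℂ) :
    Tendsto (fun n : ℕ ↦ (z + n) / n) atTop (𝓝 1) := by
  simpa using tendsto_add_mul_div_add_mul_atTop_nhds z 0 1 one_ne_zero

/-! ### The reciprocal Gamma function -/

/-- The reciprocal Gamma function `1 / Γ`. It is entire: at the poles of `Γ`, where Mathlib sets
`Γ` to be `0`, the convention `0⁻¹ = 0` supplies the correct value. -/
noncomputable def recipGamma (z : ℂ) : ℂ := (Complex.Gamma z)⁻¹

theorem recipGamma_eq_mul_add_one (z : ℂ) : recipGamma z = z * recipGamma (z + 1) :=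
  one_div_Gamma_eq_self_mul_one_div_Gamma_add_one z

theorem recipGamma_one : recipGamma 1 = 1 := by simp [recipGamma]

theorem recipGamma_ne_zero_of_re_pos {z : ℂ} (hz : 0 < z.re) : recipGamma z ≠ 0 :=
  inv_ne_zero (Gamma_ne_zero_of_re_pos hz)

theorem recipGamma_intCast_of_nonpos {k : ℤ} (hk : k ≤ 0) : recipGamma k = 0 := by
  obtain ⟨n, rfl⟩ := Int.exists_eq_neg_ofNat hk
  simp [recipGamma, Complex.Gamma_neg_nat_eq_zero]

theorem recipGamma_mul_recipGamma_one_sub (z : ℂ) :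
    recipGamma z * recipGamma (1 - z) = Complex.sin (π * z) / π := by
  rw [recipGamma, recipGamma, ← mul_inv, Complex.Gamma_mul_Gamma_one_sub, inv_div]

theorem ascPochhammer_eval_eq_prod_range {R : Type*} [CommSemiring R] (z : R) (n : ℕ) :
    (ascPochhammer R n).eval z = ∏ j ∈ Finset.range n, (z + j) := by
  induction n with
  | zero => simp
  | succ n ih => rw [ascPochhammer_succ_eval, ih, Finset.prod_range_succ]

theorem recipGamma_eq_ascPochhammer_mul (z : ℂ) (n : ℕ) :
    recipGamma z = (ascPochhammer ℂ n).eval z * recipGamma (z + n) := by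
  induction n with
  | zero => simp
  | succ n ih =>
    rw [ih, ascPochhammer_succ_eval, recipGamma_eq_mul_add_one (z + n)]
    push_cast
    ring_nf

/-- The sequence `n! n ^ (z - 1) / Γ(z + n)`, which compares `Γ(z + n)` with its leading behaviour
and tends to `1`. -/
noncomputable def gammaRatio (z : ℂ) (n : ℕ) : ℂ := n ! * (n : ℂ) ^ (z - 1) * recipGamma (z + n)

theorem gammaRatio_eq_mul_add_one (z : ℂ) {n : ℕ} (hn : n ≠ 0) :
    gammaRatio z n = gammaRatio (z + 1) n * ((z + n) / n) := by
  have hn' : (n : ℂ) ≠ 0 := Nat.cast_ne_zero.mpr hn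
  rw [gammaRatio, gammaRatio, recipGamma_eq_mul_add_one (z + n), cpow_sub _ _ hn', cpow_one,
    add_sub_cancel_right, add_right_comm z 1]
  field_simp

theorem gammaRatio_eq_GammaSeq_mul {z : ℂ} (hz : 0 < z.re) {n : ℕ} (hn : n ≠ 0) :
    gammaRatio z n = Complex.GammaSeq z n * recipGamma z * ((z + n) / n) := by
  have hn' : (n : ℂ) ≠ 0 := Nat.cast_ne_zero.mpr hn
  have hprod : ∏ j ∈ Finset.range n, (z + j) ≠ 0 := by
    refine Finset.prod_ne_zero_iff.mpr fun j _ h ↦ ?_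
    have hre : z.re + j = 0 := by simpa using congrArg re h
    linarith [j.cast_nonneg (α := ℝ)]
  have hlast : z + n ≠ 0 := fun h ↦ by
    have hre : z.re + n = 0 := by simpa using congrArg re h
    linarith [n.cast_nonneg (α := ℝ)]
  rw [gammaRatio, Complex.GammaSeq, recipGamma_eq_ascPochhammer_mul z n,
    ascPochhammer_eval_eq_prod_range, Finset.prod_range_succ, cpow_sub _ _ hn', cpow_one]
  field_simp

theorem tendsto_gammaRatio_of_re_pos {z : ℂ} (hz : 0 < z.re) :
    Tendsto (gammaRatio z) atTop (𝓝 1) := by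
  have h := ((GammaSeq_tendsto_Gamma z).mul_const (recipGamma z)).mul
    (tendsto_add_natCast_div_natCast z)
  rw [recipGamma, mul_inv_cancel₀ (Gamma_ne_zero_of_re_pos hz), one_mul] at h
  refine h.congr' ?_
  filter_upwards [eventually_ne_atTop 0] with n hn
  exact (gammaRatio_eq_GammaSeq_mul hz hn).symm

theorem tendsto_gammaRatio (z : ℂ) : Tendsto (gammaRatio z) atTop (𝓝 1) := by
  obtain ⟨m, hm⟩ := exists_nat_gt (-z.re)
  induction m generalizing z with
  | zero => exact tendsto_gammaRatio_of_re_pos (by simpa using hm)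
  | succ m ih =>
    have hm' : -(z + 1).re < m := by
      rw [add_re, one_re]
      push_cast at hm
      linarith
    have h := (ih (z + 1) hm').mul (tendsto_add_natCast_div_natCast z)
    rw [one_mul] at h
    refine h.congr' ?_
    filter_upwards [eventually_ne_atTop 0] with n hn
    exact (gammaRatio_eq_mul_add_one z hn).symm

theorem tendsto_ascPochhammer_div (z : ℂ) :
    Tendsto (fun n : ℕ ↦ (ascPochhammer ℂ n).eval z / (n ! * (n : ℂ) ^ (z - 1))) atTop
      (𝓝 (recipGamma z)) := by
  have h := (tendsto_const_nhds (x := recipGamma z)).div (tendsto_gammaRatio z) one_ne_zero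
  rw [div_one] at h
  refine h.congr' ?_
  filter_upwards [(tendsto_gammaRatio z).eventually_ne one_ne_zero] with n hn
  rw [Pi.div_apply, gammaRatio, recipGamma_eq_ascPochhammer_mul z n,
    mul_div_mul_right _ _ (right_ne_zero_of_mul hn)]

theorem recipGamma_add_div_isBigO (z w : ℂ) :
    (fun n : ℕ ↦ recipGamma (z + n) / recipGamma (w + n)) =O[atTop]
      fun n : ℕ ↦ (n : ℝ) ^ (w - z).re := by
  have hlim := (tendsto_gammaRatio z).div (tendsto_gammaRatio w) one_ne_zero
  have hpow : (fun n : ℕ ↦ (n : ℂ) ^ (w - z)) =O[atTop] fun n : ℕ ↦ (n : ℝ) ^ (w - z).re := by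
    refine .of_norm_eventuallyLE ?_
    filter_upwards [eventually_gt_atTop 0] with n hn
    exact (norm_natCast_cpow_of_pos hn _).le
  refine (hpow.mul (hlim.isBigO_one ℝ)).congr' ?_ (by simp)
  filter_upwards [eventually_ne_atTop 0] with n hn
  have hn' : (n : ℂ) ≠ 0 := Nat.cast_ne_zero.mpr hn
  have hfac : (n ! : ℂ) ≠ 0 := Nat.cast_ne_zero.mpr n.factorial_ne_zero
  have hpow_ne (v : ℂ) : (n : ℂ) ^ v ≠ 0 := by simp [cpow_eq_zero_iff, hn']
  have hsplit : (n : ℂ) ^ (w - 1) = (n : ℂ) ^ (w - z) * (n : ℂ) ^ (z - 1) := by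
    rw [← cpow_add _ _ hn', sub_add_sub_cancel]
  rw [Pi.div_apply, gammaRatio, gammaRatio, hsplit]
  field_simp [hpow_ne]

/-- The pair of factors `1 / (Γ(b + u) Γ(b - u))` attached to a parameter `b` in a well-poised
series whose summation variable is `u`. -/
noncomputable def recipGammaPair (b u : ℂ) : ℂ := recipGamma (b + u) * recipGamma (b - u)

theorem recipGammaPair_neg (b u : ℂ) : recipGammaPair b (-u) = recipGammaPair b u := by
  rw [recipGammaPair, recipGammaPair, ← sub_eq_add_neg, sub_neg_eq_add, mul_comm]

theorem recipGammaPair_eq_mul_add_one (b u : ℂ) :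
    recipGammaPair b u = (b + u) * (b - u) * recipGammaPair (b + 1) u := by
  rw [recipGammaPair, recipGammaPair, recipGamma_eq_mul_add_one (b + u),
    recipGamma_eq_mul_add_one (b - u), add_right_comm b 1 u, sub_add_eq_add_sub b u 1]
  ring

theorem recipGammaPair_sub_half_sub_half (b u : ℂ) :
    recipGammaPair (b - 1 / 2) (u - 1 / 2) = (b + u - 1) * recipGammaPair b u := by
  rw [recipGammaPair, recipGammaPair,
    show b - 1 / 2 + (u - 1 / 2) = b + u - 1 by ring, show b - 1 / 2 - (u - 1 / 2) = b - u by ring,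
    recipGamma_eq_mul_add_one (b + u - 1), sub_add_cancel, mul_assoc]

theorem recipGammaPair_sub_half_add_half (b u : ℂ) :
    recipGammaPair (b - 1 / 2) (u + 1 / 2) = (b - u - 1) * recipGammaPair b u := by
  rw [← recipGammaPair_neg _ (u + 1 / 2), ← recipGammaPair_neg b u,
    show -(u + 1 / 2) = -u - 1 / 2 by ring, recipGammaPair_sub_half_sub_half, ← sub_eq_add_neg]

theorem mul_recipGammaPair_add_one (b u : ℂ) :
    (b + u) * recipGammaPair b (u + 1) = (b - u - 1) * recipGammaPair b u := by
  rw [← recipGammaPair_sub_half_add_half, show u + 1 / 2 = u + 1 - 1 / 2 by ring,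
    recipGammaPair_sub_half_sub_half]
  ring

theorem recipGammaPair_eq_sin_mul_div {b u : ℂ} (h : recipGamma (1 - b + u) ≠ 0) :
    recipGammaPair b u =
      Complex.sin (π * (b - u)) / π * (recipGamma (b + u) / recipGamma (1 - b + u)) := by
  rw [← recipGamma_mul_recipGamma_one_sub, show 1 - (b - u) = 1 - b + u by ring, recipGammaPair]
  field_simp

theorem eventually_recipGamma_add_natCast_ne_zero (z : ℂ) :
    ∀ᶠ n : ℕ in atTop, recipGamma (z + n) ≠ 0 :=
  ((tendsto_gammaRatio z).eventually_ne one_ne_zero).mono fun _ ↦ right_ne_zero_of_mul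

theorem norm_sin_mul_sub_natCast (z : ℂ) (n : ℕ) :
    ‖Complex.sin (π * (z - n))‖ = ‖Complex.sin (π * z)‖ := by
  rw [mul_sub, mul_comm (π : ℂ) n, Complex.sin_antiperiodic.sub_nat_mul_eq, norm_mul, norm_pow,
    norm_neg, norm_one, one_pow, one_mul]

theorem recipGammaPair_add_natCast_isBigO (b u : ℂ) :
    (fun n : ℕ ↦ recipGammaPair b (u + n)) =O[atTop] fun n : ℕ ↦ (n : ℝ) ^ (1 - 2 * b.re) := by
  have hsin : (fun n : ℕ ↦ Complex.sin (π * (b - u - n)) / π) =O[atTop] fun _ ↦ (1 : ℝ) :=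
    .of_bound ‖Complex.sin (π * (b - u)) / π‖ (.of_forall fun n ↦ by
      rw [norm_div, norm_div, norm_sin_mul_sub_natCast, norm_one, mul_one])
  have hre : (1 - b + u - (b + u)).re = 1 - 2 * b.re := by
    rw [show 1 - b + u - (b + u) = 1 - 2 * b by ring]
    simp
  refine (hsin.mul (recipGamma_add_div_isBigO (b + u) (1 - b + u))).congr' ?_
    (.of_forall fun n ↦ by simp only [one_mul, hre])
  filter_upwards [eventually_recipGamma_add_natCast_ne_zero (1 - b + u)] with n hn
  rw [add_assoc] at hn
  rw [recipGammaPair_eq_sin_mul_div hn, sub_add_eq_sub_sub, add_assoc, add_assoc (1 - b)]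

theorem recipGammaPair_add_intCast_isBigO (b θ : ℂ) :
    (fun k : ℤ ↦ recipGammaPair b (θ + k)) =O[cofinite]
      fun k : ℤ ↦ |(k : ℝ)| ^ (1 - 2 * b.re) := by
  refine isBigO_abs_rpow_cofinite_of_nat ?_ ?_
  · simpa using recipGammaPair_add_natCast_isBigO b θ
  · refine (recipGammaPair_add_natCast_isBigO b (-θ)).congr_left fun n ↦ ?_
    rw [← recipGammaPair_neg]
    push_cast
    ring_nf

/-! ### Well-poised bilateral series -/

/-- The product of the factors `recipGammaPair b u` over a multiset of parameters `b`. -/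
noncomputable def recipGammaProd (s : Multiset ℂ) (u : ℂ) : ℂ :=
  (s.map fun b ↦ recipGammaPair b u).prod

theorem recipGammaProd_singleton (b u : ℂ) : recipGammaProd {b} u = recipGammaPair b u := by
  simp [recipGammaProd]

theorem recipGammaProd_cons (b : ℂ) (s : Multiset ℂ) (u : ℂ) :
    recipGammaProd (b ::ₘ s) u = recipGammaPair b u * recipGammaProd s u := by
  simp [recipGammaProd]

theorem recipGammaProd_add_intCast_isBigO (s : Multiset ℂ) (θ : ℂ) :
    (fun k : ℤ ↦ recipGammaProd s (θ + k)) =O[cofinite]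
      fun k : ℤ ↦ |(k : ℝ)| ^ (s.card - 2 * s.sum.re) := by
  induction s using Multiset.induction with
  | empty => simpa [recipGammaProd] using isBigO_refl (fun _ : ℤ ↦ (1 : ℝ)) cofinite
  | cons b s ih =>
    simp only [recipGammaProd_cons]
    refine (isBigO_abs_rpow_cofinite_mul (recipGammaPair_add_intCast_isBigO b θ) ih).congr_right
      fun k ↦ ?_
    rw [Multiset.card_cons, Multiset.sum_cons, Complex.add_re]
    push_cast
    ring_nf

/-- The summand `u ∏ 1 / (Γ(b + u) Γ(b - u))` of the well-poised bilateral series with parameters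
`b`, where `u` runs over a translate of `ℤ`. -/
noncomputable def wellPoisedTerm (s : Multiset ℂ) (u : ℂ) : ℂ := u * recipGammaProd s u

theorem summable_wellPoisedTerm {s : Multiset ℂ} (hs : s.card + 2 < 2 * s.sum.re) (θ : ℂ) :
    Summable fun k : ℤ ↦ wellPoisedTerm s (θ + k) := by
  have hexp : 1 < -(1 + (s.card - 2 * s.sum.re)) := by linarith
  refine summable_of_isBigO (Real.summable_abs_int_rpow hexp) ?_
  simpa only [wellPoisedTerm, neg_neg] using
    isBigO_abs_rpow_cofinite_mul (isBigO_add_intCast θ) (recipGammaProd_add_intCast_isBigO s θ)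

/-- The bilateral series of the terms `wellPoisedTerm s u` over `u ∈ θ + ℤ`; the number of
parameters is the cardinality of `s`. -/
noncomputable def wellPoisedSum (s : Multiset ℂ) (θ : ℂ) : ℂ :=
  ∑' k : ℤ, wellPoisedTerm s (θ + k)

/-- The companion of the summand with parameters `b₁, b₂, b₃, b₄` in the sense of Wilf and
Zeilberger: its difference is a combination of the summands with first parameter `b₁` and
`b₁ + 1`. -/
noncomputable def wellPoisedCompanion (b₁ b₂ b₃ b₄ u : ℂ) : ℂ :=
  recipGammaProd {b₁ + 1 / 2, b₂ - 1 / 2, b₃ - 1 / 2, b₄ - 1 / 2} (u - 1 / 2)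

theorem wellPoisedCompanion_sub_add_one (b₁ b₂ b₃ b₄ u : ℂ) :
    wellPoisedCompanion b₁ b₂ b₃ b₄ u - wellPoisedCompanion b₁ b₂ b₃ b₄ (u + 1) =
      2 * ((b₁ + b₂ - 1) * (b₁ + b₃ - 1) * (b₁ + b₄ - 1) *
          wellPoisedTerm {b₁ + 1, b₂, b₃, b₄} u -
        (b₁ + b₂ + b₃ + b₄ - 3) * wellPoisedTerm {b₁, b₂, b₃, b₄} u) := by
  have hb₁ : b₁ + 1 / 2 = b₁ + 1 - 1 / 2 := by ring
  have hu : u + 1 - 1 / 2 = u + 1 / 2 := by ring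
  simp only [wellPoisedCompanion, wellPoisedTerm, Multiset.insert_eq_cons, recipGammaProd_cons,
    recipGammaProd_singleton, hu]
  simp only [hb₁, recipGammaPair_sub_half_sub_half, recipGammaPair_sub_half_add_half,
    recipGammaPair_eq_mul_add_one b₁ u]
  ring

theorem tendsto_wellPoisedCompanion {b₁ b₂ b₃ b₄ : ℂ} (hb : 3 < (b₁ + b₂ + b₃ + b₄).re) (θ : ℂ) :
    Tendsto (fun k : ℤ ↦ wellPoisedCompanion b₁ b₂ b₃ b₄ (θ + k)) cofinite (𝓝 0) := by
  have h := (recipGammaProd_add_intCast_isBigO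
    {b₁ + 1 / 2, b₂ - 1 / 2, b₃ - 1 / 2, b₄ - 1 / 2} (θ - 1 / 2)).trans_tendsto
    (tendsto_abs_rpow_cofinite ?_)
  · simpa only [wellPoisedCompanion, sub_add_eq_add_sub] using h
  · simp only [Multiset.insert_eq_cons, Multiset.card_cons, Multiset.card_singleton,
      Multiset.sum_cons, Multiset.sum_singleton, add_re, sub_re] at hb ⊢
    norm_num
    linarith

theorem summable_wellPoisedTerm_of_four {b₁ b₂ b₃ b₄ : ℂ} (hb : 3 < (b₁ + b₂ + b₃ + b₄).re)
    (θ : ℂ) : Summable fun k : ℤ ↦ wellPoisedTerm {b₁, b₂, b₃, b₄} (θ + k) := by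
  refine summable_wellPoisedTerm ?_ θ
  simp only [Multiset.insert_eq_cons, Multiset.card_cons, Multiset.card_singleton,
    Multiset.sum_cons, Multiset.sum_singleton, add_re] at hb ⊢
  push_cast
  linarith

theorem wellPoisedSum_recurrence {b₁ b₂ b₃ b₄ : ℂ} (hb : 3 < (b₁ + b₂ + b₃ + b₄).re) (θ : ℂ) :
    (b₁ + b₂ + b₃ + b₄ - 3) * wellPoisedSum {b₁, b₂, b₃, b₄} θ =
      (b₁ + b₂ - 1) * (b₁ + b₃ - 1) * (b₁ + b₄ - 1) *
        wellPoisedSum {b₁ + 1, b₂, b₃, b₄} θ := by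
  have hsucc : 3 < (b₁ + 1 + b₂ + b₃ + b₄).re := by
    simp only [add_re, one_re] at hb ⊢
    linarith
  have hdiff := (((summable_wellPoisedTerm_of_four hsucc θ).hasSum.mul_left
    ((b₁ + b₂ - 1) * (b₁ + b₃ - 1) * (b₁ + b₄ - 1))).sub
    ((summable_wellPoisedTerm_of_four hb θ).hasSum.mul_left (b₁ + b₂ + b₃ + b₄ - 3))).mul_left 2
  have hcompanion (k : ℤ) : wellPoisedCompanion b₁ b₂ b₃ b₄ (θ + k + 1) =
      wellPoisedCompanion b₁ b₂ b₃ b₄ (θ + (k + 1 : ℤ)) := by push_cast; rw [add_assoc]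
  simp only [← wellPoisedCompanion_sub_add_one, hcompanion] at hdiff
  have hzero := hdiff.unique
    (hasSum_sub_add_one_of_tendsto_cofinite (tendsto_wellPoisedCompanion hb θ) hdiff.summable)
  simp only [wellPoisedSum]
  linear_combination -(1 / 2) * hzero

theorem wellPoisedSum_mul_ascPochhammer {b₁ b₂ b₃ b₄ : ℂ} (hb : 3 < (b₁ + b₂ + b₃ + b₄).re)
    (θ : ℂ) (n : ℕ) :
    (ascPochhammer ℂ n).eval (b₁ + b₂ + b₃ + b₄ - 3) * wellPoisedSum {b₁, b₂, b₃, b₄} θ =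
      (ascPochhammer ℂ n).eval (b₁ + b₂ - 1) * (ascPochhammer ℂ n).eval (b₁ + b₃ - 1) *
        (ascPochhammer ℂ n).eval (b₁ + b₄ - 1) * wellPoisedSum {b₁ + n, b₂, b₃, b₄} θ := by
  induction n with
  | zero => simp
  | succ n ih =>
    have hn : 3 < (b₁ + n + b₂ + b₃ + b₄).re := by
      simp only [add_re, natCast_re] at hb ⊢
      linarith [n.cast_nonneg (α := ℝ)]
    have hrec := wellPoisedSum_recurrence hn θ
    simp only [ascPochhammer_succ_eval, Nat.cast_add, Nat.cast_one, ← add_assoc]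
    linear_combination (b₁ + b₂ + b₃ + b₄ - 3 + n) * ih +
      (ascPochhammer ℂ n).eval (b₁ + b₂ - 1) * (ascPochhammer ℂ n).eval (b₁ + b₃ - 1) *
        (ascPochhammer ℂ n).eval (b₁ + b₄ - 1) * hrec

theorem norm_recipGammaPair_add_one_le {b u : ℂ} (hne : b + u ≠ 0)
    (h : 0 ≤ (2 * b.re - 1) * (2 * u.re + 1) + 4 * b.im * u.im) :
    ‖recipGammaPair b (u + 1)‖ ≤ ‖recipGammaPair b u‖ := by
  -- `‖b + u‖ ^ 2 - ‖b - u - 1‖ ^ 2` is the quantity assumed nonnegative.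
  have hfactor : ‖b - u - 1‖ ≤ ‖b + u‖ := by
    rw [← sq_le_sq₀ (norm_nonneg _) (norm_nonneg _), ← Complex.normSq_eq_norm_sq,
      ← Complex.normSq_eq_norm_sq, Complex.normSq_apply, Complex.normSq_apply]
    simp only [add_re, sub_re, one_re, add_im, sub_im, one_im]
    linarith
  refine le_of_mul_le_mul_left ?_ (norm_pos_iff.mpr hne)
  rw [← norm_mul, mul_recipGammaPair_add_one, norm_mul]
  gcongr

theorem eventually_antitone_norm_recipGammaPair (b : ℂ) {u : ℂ} (hu : 0 ≤ u.re) :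
    ∀ᶠ n : ℕ in atTop, Antitone fun k : ℕ ↦ ‖recipGammaPair (b + n) (u + k)‖ := by
  filter_upwards [tendsto_natCast_atTop_atTop.eventually_ge_atTop
    (1 - b.re + 2 * |b.im * u.im|)] with n hn
  refine antitone_nat_of_succ_le fun k ↦ ?_
  have hk : (0 : ℝ) ≤ k := k.cast_nonneg
  have him : -|b.im * u.im| ≤ b.im * u.im := neg_abs_le _
  rw [Nat.cast_add_one, ← add_assoc]
  refine norm_recipGammaPair_add_one_le (fun h ↦ ?_) ?_
  · have hre := congrArg Complex.re h
    simp only [add_re, natCast_re, zero_re] at hre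
    linarith [abs_nonneg (b.im * u.im)]
  · simp only [add_re, add_im, natCast_re, natCast_im, add_zero]
    nlinarith [mul_nonneg (add_nonneg hu hk) (abs_nonneg (b.im * u.im))]

/-- The factor `n!² n ^ (2 b - 2)` normalising the pair `recipGammaPair (b + n)` to tend to `1`. -/
noncomputable def recipGammaPairScale (b : ℂ) (n : ℕ) : ℂ := (n ! : ℂ) ^ 2 * (n : ℂ) ^ (2 * b - 2)

theorem recipGammaPairScale_mul (b u : ℂ) {n : ℕ} (hn : n ≠ 0) :
    recipGammaPairScale b n * recipGammaPair (b + n) u =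
      gammaRatio (b + u) n * gammaRatio (b - u) n := by
  have hpow : (n : ℂ) ^ (2 * b - 2) = (n : ℂ) ^ (b + u - 1) * (n : ℂ) ^ (b - u - 1) := by
    rw [← cpow_add _ _ (Nat.cast_ne_zero.mpr hn)]
    ring_nf
  rw [recipGammaPairScale, recipGammaPair, gammaRatio, gammaRatio, hpow, add_right_comm b _ u,
    add_sub_right_comm b _ u]
  ring

theorem tendsto_recipGammaPairScale_mul (b u : ℂ) :
    Tendsto (fun n ↦ recipGammaPairScale b n * recipGammaPair (b + n) u) atTop (𝓝 1) := by
  have h := (tendsto_gammaRatio (b + u)).mul (tendsto_gammaRatio (b - u))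
  rw [one_mul] at h
  refine h.congr' ?_
  filter_upwards [eventually_ne_atTop 0] with n hn
  exact (recipGammaPairScale_mul b u hn).symm

theorem eventually_norm_recipGammaPairScale_mul_le_two (b u : ℂ) :
    ∀ᶠ n in atTop, ‖recipGammaPairScale b n * recipGammaPair (b + n) u‖ ≤ 2 := by
  have h := (tendsto_recipGammaPairScale_mul b u).norm
  rw [norm_one] at h
  exact h.eventually_le_const one_lt_two

theorem eventually_forall_nat_norm_recipGammaPairScale_mul_le_two (b u : ℂ) :
    ∀ᶠ n in atTop, ∀ k : ℕ, ‖recipGammaPairScale b n * recipGammaPair (b + n) (u + k)‖ ≤ 2 := by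
  obtain ⟨m, hm⟩ := exists_nat_ge (-u.re)
  induction m generalizing u with
  | zero =>
    filter_upwards [eventually_norm_recipGammaPairScale_mul_le_two b u,
      eventually_antitone_norm_recipGammaPair b (u := u) (by simpa using hm)] with n hn hanti k
    have hk : ‖recipGammaPair (b + n) (u + k)‖ ≤ ‖recipGammaPair (b + n) u‖ := by
      simpa using hanti k.zero_le
    rw [norm_mul] at hn ⊢
    exact (mul_le_mul_of_nonneg_left hk (norm_nonneg _)).trans hn
  | succ m ih =>
    have hm' : -(u + 1).re ≤ m := by
      rw [add_re, one_re]
      push_cast at hm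
      linarith
    filter_upwards [eventually_norm_recipGammaPairScale_mul_le_two b u, ih (u + 1) hm']
      with n hzero hsucc k
    cases k with
    | zero => simpa using hzero
    | succ k => simpa [add_assoc, add_comm, add_left_comm] using hsucc k

theorem eventually_forall_int_norm_recipGammaPairScale_mul_le_two (b θ : ℂ) :
    ∀ᶠ n in atTop, ∀ k : ℤ, ‖recipGammaPairScale b n * recipGammaPair (b + n) (θ + k)‖ ≤ 2 := by
  filter_upwards [eventually_forall_nat_norm_recipGammaPairScale_mul_le_two b θ,
    eventually_forall_nat_norm_recipGammaPairScale_mul_le_two b (-θ)] with n hpos hneg k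
  obtain ⟨m, rfl | rfl⟩ := k.eq_nat_or_neg
  · exact_mod_cast hpos m
  · rw [← recipGammaPair_neg]
    simpa [add_comm] using hneg m

theorem wellPoisedTerm_cons (b : ℂ) (s : Multiset ℂ) (u : ℂ) :
    wellPoisedTerm (b ::ₘ s) u = recipGammaPair b u * wellPoisedTerm s u := by
  rw [wellPoisedTerm, wellPoisedTerm, recipGammaProd_cons, mul_left_comm]

theorem tendsto_recipGammaPairScale_mul_wellPoisedSum (b : ℂ) {s : Multiset ℂ} {θ : ℂ}
    (hs : Summable fun k : ℤ ↦ wellPoisedTerm s (θ + k)) :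
    Tendsto (fun n ↦ recipGammaPairScale b n * wellPoisedSum ((b + n) ::ₘ s) θ) atTop
      (𝓝 (wellPoisedSum s θ)) := by
  simp only [wellPoisedSum, wellPoisedTerm_cons, ← tsum_mul_left, ← mul_assoc]
  refine tendsto_tsum_of_dominated_convergence (hs.norm.mul_left 2) (fun k ↦ ?_) ?_
  · simpa using (tendsto_recipGammaPairScale_mul b (θ + k)).mul_const (wellPoisedTerm s (θ + k))
  · filter_upwards [eventually_forall_int_norm_recipGammaPairScale_mul_le_two b θ] with n hn k
    rw [norm_mul]
    exact mul_le_mul_of_nonneg_right (hn k) (norm_nonneg _)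

/-- The factor by which the series with parameters `b₁, b₂, b₃, b₄` differs from the one with
parameters `b₂, b₃, b₄`. -/
noncomputable def dougallFactor (b₁ b₂ b₃ b₄ : ℂ) : ℂ :=
  Complex.Gamma (b₁ + b₂ + b₃ + b₄ - 3) *
    (recipGamma (b₁ + b₂ - 1) * recipGamma (b₁ + b₃ - 1) * recipGamma (b₁ + b₄ - 1))

theorem ascPochhammer_div_mul_wellPoisedSum {b₁ b₂ b₃ b₄ : ℂ}
    (hb : 3 < (b₁ + b₂ + b₃ + b₄).re) (θ : ℂ) {n : ℕ} (hn : n ≠ 0) :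
    (ascPochhammer ℂ n).eval (b₁ + b₂ + b₃ + b₄ - 3) /
          (n ! * (n : ℂ) ^ (b₁ + b₂ + b₃ + b₄ - 3 - 1)) * wellPoisedSum {b₁, b₂, b₃, b₄} θ =
      (ascPochhammer ℂ n).eval (b₁ + b₂ - 1) / (n ! * (n : ℂ) ^ (b₁ + b₂ - 1 - 1)) *
        ((ascPochhammer ℂ n).eval (b₁ + b₃ - 1) / (n ! * (n : ℂ) ^ (b₁ + b₃ - 1 - 1))) *
        ((ascPochhammer ℂ n).eval (b₁ + b₄ - 1) / (n ! * (n : ℂ) ^ (b₁ + b₄ - 1 - 1))) *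
        (recipGammaPairScale b₁ n * wellPoisedSum {b₁ + n, b₂, b₃, b₄} θ) := by
  have hn' : (n : ℂ) ≠ 0 := Nat.cast_ne_zero.mpr hn
  have hpow : (n : ℂ) ^ (b₁ + b₂ - 1 - 1) * (n : ℂ) ^ (b₁ + b₃ - 1 - 1) *
      (n : ℂ) ^ (b₁ + b₄ - 1 - 1) =
        (n : ℂ) ^ (b₁ + b₂ + b₃ + b₄ - 3 - 1) * (n : ℂ) ^ (2 * b₁ - 2) := by
    simp only [← cpow_add _ _ hn']
    ring_nf
  have hfac : (n ! : ℂ) ≠ 0 := Nat.cast_ne_zero.mpr n.factorial_ne_zero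
  have hpow_ne (z : ℂ) : (n : ℂ) ^ z ≠ 0 := cpow_ne_zero_iff.mpr (.inl hn')
  have hscale : recipGammaPairScale b₁ n * (n ! * (n : ℂ) ^ (b₁ + b₂ + b₃ + b₄ - 3 - 1)) =
      n ! * (n : ℂ) ^ (b₁ + b₂ - 1 - 1) * (n ! * (n : ℂ) ^ (b₁ + b₃ - 1 - 1)) *
        (n ! * (n : ℂ) ^ (b₁ + b₄ - 1 - 1)) := by
    rw [recipGammaPairScale]
    linear_combination -(n ! : ℂ) ^ 3 * hpow
  rw [div_mul_eq_mul_div, wellPoisedSum_mul_ascPochhammer hb, div_mul_div_comm, div_mul_div_comm,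
    ← hscale, recipGammaPairScale]
  field_simp [hpow_ne]

theorem wellPoisedSum_four_eq_dougallFactor_mul {b₁ b₂ b₃ b₄ : ℂ}
    (hb : 3 < (b₁ + b₂ + b₃ + b₄).re) (hb' : 5 / 2 < (b₂ + b₃ + b₄).re) (θ : ℂ) :
    wellPoisedSum {b₁, b₂, b₃, b₄} θ =
      dougallFactor b₁ b₂ b₃ b₄ * wellPoisedSum {b₂, b₃, b₄} θ := by
  have hsummable : Summable fun k : ℤ ↦ wellPoisedTerm {b₂, b₃, b₄} (θ + k) := by
    refine summable_wellPoisedTerm ?_ θ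
    simp only [Multiset.insert_eq_cons, Multiset.card_cons, Multiset.card_singleton,
      Multiset.sum_cons, Multiset.sum_singleton, add_re] at hb' ⊢
    push_cast
    linarith
  have hleft := (tendsto_ascPochhammer_div (b₁ + b₂ + b₃ + b₄ - 3)).mul_const
    (wellPoisedSum {b₁, b₂, b₃, b₄} θ)
  have hright := (((tendsto_ascPochhammer_div (b₁ + b₂ - 1)).mul
    (tendsto_ascPochhammer_div (b₁ + b₃ - 1))).mul (tendsto_ascPochhammer_div (b₁ + b₄ - 1))).mul
    (tendsto_recipGammaPairScale_mul_wellPoisedSum b₁ hsummable)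
  have hlimit := tendsto_nhds_unique_of_eventuallyEq hleft hright <| by
    filter_upwards [eventually_ne_atTop 0] with n hn
    exact ascPochhammer_div_mul_wellPoisedSum hb θ hn
  have hGamma : Complex.Gamma (b₁ + b₂ + b₃ + b₄ - 3) ≠ 0 :=
    Gamma_ne_zero_of_re_pos (by simpa using hb)
  rw [dougallFactor, mul_assoc, ← hlimit, recipGamma, mul_inv_cancel_left₀ hGamma]

/-! ### Transport of Dougall's formula -/

theorem dougallFactor_ne_zero {b₁ b₂ b₃ b₄ : ℂ} (hb : 3 < (b₁ + b₂ + b₃ + b₄).re)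
    (h₂ : 1 < (b₁ + b₂).re) (h₃ : 1 < (b₁ + b₃).re) (h₄ : 1 < (b₁ + b₄).re) :
    dougallFactor b₁ b₂ b₃ b₄ ≠ 0 := by
  have hrecip {z : ℂ} (hz : 1 < z.re) : recipGamma (z - 1) ≠ 0 :=
    recipGamma_ne_zero_of_re_pos (by simpa using hz)
  exact mul_ne_zero (Gamma_ne_zero_of_re_pos (by simpa using hb))
    (mul_ne_zero (mul_ne_zero (hrecip h₂) (hrecip h₃)) (hrecip h₄))

theorem dougallFactor_recurrence {b₁ b₂ b₃ b₄ : ℂ} (hb : b₁ + b₂ + b₃ + b₄ - 3 ≠ 0) :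
    (b₁ + b₂ + b₃ + b₄ - 3) * dougallFactor b₁ b₂ b₃ b₄ =
      (b₁ + b₂ - 1) * (b₁ + b₃ - 1) * (b₁ + b₄ - 1) * dougallFactor (b₁ + 1) b₂ b₃ b₄ := by
  have hGamma := Complex.Gamma_add_one _ hb
  rw [dougallFactor, dougallFactor, recipGamma_eq_mul_add_one (b₁ + b₂ - 1),
    recipGamma_eq_mul_add_one (b₁ + b₃ - 1), recipGamma_eq_mul_add_one (b₁ + b₄ - 1),
    show b₁ + 1 + b₂ + b₃ + b₄ - 3 = b₁ + b₂ + b₃ + b₄ - 3 + 1 by ring, hGamma]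
  ring_nf

/-- The value of the series with parameters `b₁, b₂, b₃, b₄` predicted by Dougall's formula,
grouped so as to isolate its dependence on `b₁`. -/
noncomputable def dougallValue (b₁ b₂ b₃ b₄ θ : ℂ) : ℂ :=
  Complex.sin (2 * π * θ) / (2 * π) * (dougallFactor b₁ b₂ b₃ b₄ *
    (recipGamma (b₂ + b₃ - 1) * recipGamma (b₂ + b₄ - 1) * recipGamma (b₃ + b₄ - 1)))

/-- Dougall's formula at the given parameters, as a statement that is transported from one set of
parameters to another. -/
def DougallFormula (θ b₁ b₂ b₃ b₄ : ℂ) : Prop :=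
  wellPoisedSum {b₁, b₂, b₃, b₄} θ = dougallValue b₁ b₂ b₃ b₄ θ

namespace DougallFormula

variable {θ b₁ b₂ b₃ b₄ : ℂ}

theorem swap (h : DougallFormula θ b₁ b₂ b₃ b₄) : DougallFormula θ b₂ b₁ b₃ b₄ := by
  have hperm : ({b₂, b₁, b₃, b₄} : Multiset ℂ) = {b₁, b₂, b₃, b₄} :=
    Multiset.cons_swap b₂ b₁ {b₃, b₄}
  rw [DougallFormula, hperm, h, dougallValue, dougallValue, dougallFactor, dougallFactor]
  ring_nf

theorem rotate (h : DougallFormula θ b₁ b₂ b₃ b₄) : DougallFormula θ b₂ b₃ b₄ b₁ := by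
  have hperm : ({b₂, b₃, b₄, b₁} : Multiset ℂ) = {b₁, b₂, b₃, b₄} := by
    simp only [Multiset.insert_eq_cons, ← Multiset.cons_zero, Multiset.cons_swap]
  rw [DougallFormula, hperm, h, dougallValue, dougallValue, dougallFactor, dougallFactor]
  ring_nf

theorem change_first (h : DougallFormula θ b₁ b₂ b₃ b₄) {b : ℂ}
    (hb₁ : 3 < (b₁ + b₂ + b₃ + b₄).re) (hb : 3 < (b + b₂ + b₃ + b₄).re)
    (htail : 5 / 2 < (b₂ + b₃ + b₄).re) (hfactor : dougallFactor b₁ b₂ b₃ b₄ ≠ 0) :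
    DougallFormula θ b b₂ b₃ b₄ := by
  rw [DougallFormula, wellPoisedSum_four_eq_dougallFactor_mul hb₁ htail, dougallValue,
    mul_left_comm] at h
  rw [DougallFormula, wellPoisedSum_four_eq_dougallFactor_mul hb htail, dougallValue,
    mul_left_cancel₀ hfactor h, mul_left_comm]

theorem of_add_one (hb : 3 < (b₁ + b₂ + b₃ + b₄).re) (h : DougallFormula θ (b₁ + 1) b₂ b₃ b₄) :
    DougallFormula θ b₁ b₂ b₃ b₄ := by
  have hne : b₁ + b₂ + b₃ + b₄ - 3 ≠ 0 := ne_zero_of_re_pos (by simpa using hb)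
  rw [DougallFormula, dougallValue] at h ⊢
  refine mul_left_cancel₀ hne ?_
  rw [wellPoisedSum_recurrence hb, h]
  linear_combination -(Complex.sin (2 * π * θ) / (2 * π) *
    (recipGamma (b₂ + b₃ - 1) * recipGamma (b₂ + b₄ - 1) * recipGamma (b₃ + b₄ - 1))) *
      dougallFactor_recurrence hne

theorem of_add_natCast (hb : 3 < (b₁ + b₂ + b₃ + b₄).re) {n : ℕ}
    (h : DougallFormula θ (b₁ + n) b₂ b₃ b₄) : DougallFormula θ b₁ b₂ b₃ b₄ := by
  induction n with
  | zero => simpa using h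
  | succ n ih =>
    refine ih (of_add_one ?_ (by rwa [add_assoc, ← Nat.cast_add_one]))
    simp only [add_re, natCast_re] at hb ⊢
    linarith [n.cast_nonneg (α := ℝ)]

theorem of_forall_add_natCast (hb : 3 < (b₁ + b₂ + b₃ + b₄).re) {n : ℕ}
    (h : DougallFormula θ (b₁ + n) (b₂ + n) (b₃ + n) (b₄ + n)) :
    DougallFormula θ b₁ b₂ b₃ b₄ := by
  have hn := n.cast_nonneg (α := ℝ)
  simp only [add_re] at hb
  have h₁ : DougallFormula θ b₁ (b₂ + n) (b₃ + n) (b₄ + n) :=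
    h.of_add_natCast (by simp only [add_re, natCast_re]; linarith only [hb, hn])
  have h₂ : DougallFormula θ b₂ (b₃ + n) (b₄ + n) b₁ :=
    h₁.rotate.of_add_natCast (by simp only [add_re, natCast_re]; linarith only [hb, hn])
  have h₃ : DougallFormula θ b₃ (b₄ + n) b₁ b₂ :=
    h₂.rotate.of_add_natCast (by simp only [add_re, natCast_re]; linarith only [hb, hn])
  have h₄ : DougallFormula θ b₄ b₁ b₂ b₃ :=
    h₃.rotate.of_add_natCast (by simp only [add_re]; linarith only [hb])
  exact h₄.rotate

end DougallFormula

theorem recipGammaPair_mul_recipGammaPair_eq_zero (θ : ℂ) {k : ℤ} (hk : k ≠ 0) :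
    recipGammaPair (1 + θ) (θ + k) * recipGammaPair (1 - θ) (θ + k) = 0 := by
  rw [recipGammaPair, recipGammaPair,
    show 1 + θ - (θ + k) = ((1 - k : ℤ) : ℂ) by push_cast; ring,
    show 1 - θ + (θ + k) = ((1 + k : ℤ) : ℂ) by push_cast; ring]
  rcases lt_or_gt_of_ne hk with hneg | hpos
  · rw [recipGamma_intCast_of_nonpos (k := 1 + k) (by lia), zero_mul, mul_zero]
  · rw [recipGamma_intCast_of_nonpos (k := 1 - k) (by lia), mul_zero, zero_mul]

theorem mul_recipGammaPair_mul_recipGammaPair (θ : ℂ) :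
    θ * (recipGammaPair (1 + θ) θ * recipGammaPair (1 - θ) θ) =
      Complex.sin (2 * π * θ) / (2 * π) := by
  have hpair : recipGammaPair (1 + θ) θ * recipGammaPair (1 - θ) θ =
      recipGamma (2 * θ + 1) * recipGamma (1 - 2 * θ) := by
    rw [recipGammaPair, recipGammaPair, add_sub_cancel_right, sub_add_cancel, recipGamma_one]
    ring_nf
  rw [hpair, show 2 * (π : ℂ) * θ = π * (2 * θ) by ring, mul_comm 2 (π : ℂ), ← div_div,
    ← recipGamma_mul_recipGamma_one_sub, recipGamma_eq_mul_add_one (2 * θ)]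
  ring

theorem wellPoisedSum_one_add_one_sub (c d θ : ℂ) :
    wellPoisedSum {1 + θ, 1 - θ, c, d} θ =
      Complex.sin (2 * π * θ) / (2 * π) * (recipGammaPair c θ * recipGammaPair d θ) := by
  have hprod (u : ℂ) : recipGammaProd {1 + θ, 1 - θ, c, d} u =
      recipGammaPair (1 + θ) u * recipGammaPair (1 - θ) u *
        (recipGammaPair c u * recipGammaPair d u) := by
    simp only [Multiset.insert_eq_cons, recipGammaProd_cons, recipGammaProd_singleton, mul_assoc]
  rw [wellPoisedSum, tsum_eq_single (0 : ℤ) fun k hk ↦ ?_]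
  · rw [Int.cast_zero, add_zero, wellPoisedTerm, hprod, ← mul_recipGammaPair_mul_recipGammaPair]
    ring
  · rw [wellPoisedTerm, hprod, recipGammaPair_mul_recipGammaPair_eq_zero θ hk, zero_mul, mul_zero]

theorem dougallFormula_one_add_one_sub {c d : ℂ} (hcd : 1 < (c + d).re) (θ : ℂ) :
    DougallFormula θ (1 + θ) (1 - θ) c d := by
  have hGamma : Complex.Gamma (c + d - 1) * recipGamma (c + d - 1) = 1 :=
    mul_inv_cancel₀ (Gamma_ne_zero_of_re_pos (by simpa using hcd))
  rw [DougallFormula, wellPoisedSum_one_add_one_sub, dougallValue, dougallFactor,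
    show 1 + θ + (1 - θ) + c + d - 3 = c + d - 1 by ring,
    show 1 + θ + (1 - θ) - 1 = 1 by ring, recipGamma_one, show 1 + θ + c - 1 = c + θ by ring,
    show 1 + θ + d - 1 = d + θ by ring, show 1 - θ + c - 1 = c - θ by ring,
    show 1 - θ + d - 1 = d - θ by ring, recipGammaPair, recipGammaPair]
  linear_combination -(Complex.sin (2 * π * θ) / (2 * π) *
    (recipGamma (c + θ) * recipGamma (c - θ) * (recipGamma (d + θ) * recipGamma (d - θ)))) *
      hGamma

theorem dougallFormula_of_large {b₁ b₂ b₃ b₄ θ : ℂ} (h₁ : 1 + |θ.re| < b₁.re)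
    (h₂ : 1 + |θ.re| < b₂.re) (h₃ : 1 + |θ.re| < b₃.re) (h₄ : 1 + |θ.re| < b₄.re) :
    DougallFormula θ b₁ b₂ b₃ b₄ := by
  have hθ := abs_nonneg θ.re
  have hle := le_abs_self θ.re
  have hge := neg_abs_le θ.re
  have hspecial : DougallFormula θ (1 + θ) (1 - θ) b₃ b₄ :=
    dougallFormula_one_add_one_sub (by rw [add_re]; linarith) θ
  have hfirst : DougallFormula θ b₁ (1 - θ) b₃ b₄ := by
    refine hspecial.change_first ?_ ?_ ?_ (dougallFactor_ne_zero ?_ ?_ ?_ ?_) <;>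
      simp only [add_re, sub_re, one_re] <;> linarith
  have hsecond : DougallFormula θ b₂ b₁ b₃ b₄ := by
    refine hfirst.swap.change_first ?_ ?_ ?_ (dougallFactor_ne_zero ?_ ?_ ?_ ?_) <;>
      simp only [add_re, sub_re, one_re] <;> linarith
  exact hsecond.swap

theorem dougallFormula_of_three_lt_re {b₁ b₂ b₃ b₄ : ℂ} (hb : 3 < (b₁ + b₂ + b₃ + b₄).re) (θ : ℂ) :
    DougallFormula θ b₁ b₂ b₃ b₄ := by
  have hlarge (b : ℂ) : ∀ᶠ n : ℕ in atTop, 1 + |θ.re| < (b + n).re := by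
    filter_upwards [tendsto_natCast_atTop_atTop.eventually_gt_atTop (1 + |θ.re| - b.re)] with n hn
    rw [add_re, natCast_re]
    linarith
  obtain ⟨n, h₁, h₂, h₃, h₄⟩ :=
    ((hlarge b₁).and ((hlarge b₂).and ((hlarge b₃).and (hlarge b₄)))).exists
  exact (dougallFormula_of_large h₁ h₂ h₃ h₄).of_forall_add_natCast hb

theorem wellPoisedTerm_four (b₁ b₂ b₃ b₄ u : ℂ) :
    wellPoisedTerm {b₁, b₂, b₃, b₄} u =
      u * (recipGamma (b₁ + u) * recipGamma (b₁ - u) *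
        (recipGamma (b₂ + u) * recipGamma (b₂ - u)) *
        (recipGamma (b₃ + u) * recipGamma (b₃ - u)) *
        (recipGamma (b₄ + u) * recipGamma (b₄ - u))) := by
  simp only [wellPoisedTerm, Multiset.insert_eq_cons, recipGammaProd_cons,
    recipGammaProd_singleton, recipGammaPair, mul_assoc]

theorem dougall_5H5_general (b₁ b₂ b₃ b₄ θ : ℂ) (hb : 3 < (b₁ + b₂ + b₃ + b₄).re) :
    HasSum (fun k : ℤ ↦ ((k : ℂ) + θ) /
      (Complex.Gamma (b₁ + θ + k) * Complex.Gamma (b₁ - θ - k) *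
        (Complex.Gamma (b₂ + θ + k) * Complex.Gamma (b₂ - θ - k)) *
        (Complex.Gamma (b₃ + θ + k) * Complex.Gamma (b₃ - θ - k)) *
        (Complex.Gamma (b₄ + θ + k) * Complex.Gamma (b₄ - θ - k))))
      (Complex.sin (2 * (π : ℂ) * θ) / (2 * (π : ℂ)) *
        (Complex.Gamma (b₁ + b₂ + b₃ + b₄ - 3) /
          (Complex.Gamma (b₁ + b₂ - 1) * Complex.Gamma (b₁ + b₃ - 1) *
            Complex.Gamma (b₁ + b₄ - 1) * Complex.Gamma (b₂ + b₃ - 1) *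
            Complex.Gamma (b₂ + b₄ - 1) * Complex.Gamma (b₃ + b₄ - 1)))) := by
  have hsum := (summable_wellPoisedTerm_of_four hb θ).hasSum
  rw [← wellPoisedSum, dougallFormula_of_three_lt_re hb θ] at hsum
  convert hsum using 1
  · funext k
    simp only [wellPoisedTerm_four, recipGamma, div_eq_mul_inv, mul_inv, add_assoc, sub_sub,
      add_comm (k : ℂ) θ]
  · simp only [dougallValue, dougallFactor, recipGamma, div_eq_mul_inv, mul_inv]
    ring

/-- the Dougall bilateral `₅H₅` formula:
`∑_{k∈ℤ} (k+θ)/∏_{α=1}^4 Γ(b_α+θ+k)Γ(b_α-θ-k)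
  = (sin 2πθ)/(2π) · Γ(b₁+b₂+b₃+b₄-3)/∏_{α<β} Γ(b_α+b_β-1)`
for `Re(b₁+b₂+b₃+b₄) > 3` and `θ` not an integer. -/
theorem dougall_5H5 (b₁ b₂ b₃ b₄ θ : ℂ) (hb : 3 < (b₁ + b₂ + b₃ + b₄).re)
    (hθ : ∀ m : ℤ, θ ≠ (m : ℂ)) :
    (∑' k : ℤ, ((k : ℂ) + θ) /
      (Complex.Gamma (b₁ + θ + k) * Complex.Gamma (b₁ - θ - k) *
        (Complex.Gamma (b₂ + θ + k) * Complex.Gamma (b₂ - θ - k)) *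
        (Complex.Gamma (b₃ + θ + k) * Complex.Gamma (b₃ - θ - k)) *
        (Complex.Gamma (b₄ + θ + k) * Complex.Gamma (b₄ - θ - k)))) =
      Complex.sin (2 * (π : ℂ) * θ) / (2 * (π : ℂ)) *
        (Complex.Gamma (b₁ + b₂ + b₃ + b₄ - 3) /
          (Complex.Gamma (b₁ + b₂ - 1) * Complex.Gamma (b₁ + b₃ - 1) *
            Complex.Gamma (b₁ + b₄ - 1) * Complex.Gamma (b₂ + b₃ - 1) *
            Complex.Gamma (b₂ + b₄ - 1) * Complex.Gamma (b₃ + b₄ - 1))) :=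
  (dougall_5H5_general b₁ b₂ b₃ b₄ θ hb).tsum_eq
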